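/- Let d ≥ 1 and let μ be the Haar probability measure on the unitary group Matrix.unitaryGroup (Fin d) ℂ. Then ∫ ‖(U : Matrix (Fin d) (Fin d) ℂ) 0 0‖ dμ(U) = √π · Γ(d) / (2 · Γ(d + 1/2)), where Γ denotes the real Gamma function. Equivalently, this value equals 4^{d-1} / ((2d-1) · C(2d-2, d-1)) with C a binomial coefficient. -/

import Mathlib

open Matrix MeasureTheory

theorem integral_norm_mul_exp_neg_norm_sq {E : Type*} [NormedAddCommGroup E] [NormedSpace ℝ E]
    [FiniteDimensional ℝ E] [Nontrivial E] [MeasurableSpace E] [BorelSpace E]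
    (ν : Measure E) [ν.IsAddHaarMeasure] :
    ∫ z : E, ‖z‖ * Real.exp (-‖z‖ ^ 2) ∂ν =
      Real.Gamma ((Module.finrank ℝ E + 1) / 2) / Real.Gamma (Module.finrank ℝ E / 2) *
        ∫ z : E, Real.exp (-‖z‖ ^ 2) ∂ν := by
  have hn : 0 < Module.finrank ℝ E := Module.finrank_pos
  have hn' : (0 : ℝ) < Module.finrank ℝ E := by exact_mod_cast hn
  have h (k : ℕ) : ∫ y in Set.Ioi (0 : ℝ), y ^ k * Real.exp (-y ^ 2) =
      1 / 2 * Real.Gamma ((k + 1) / 2) := by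
    simpa using integral_rpow_mul_exp_neg_rpow (p := 2) (q := k) (by norm_num)
      (by linarith [k.cast_nonneg (α := ℝ)])
  have h₁ := h (Module.finrank ℝ E - 1)
  have h₂ := h (Module.finrank ℝ E)
  rw [Nat.cast_sub hn, Nat.cast_one, sub_add_cancel] at h₁
  rw [integral_fun_norm_addHaar ν fun y ↦ y * Real.exp (-y ^ 2),
    integral_fun_norm_addHaar ν fun y ↦ Real.exp (-y ^ 2)]
  simp only [smul_eq_mul, ← mul_assoc, pow_sub_one_mul hn.ne']
  rw [h₁, h₂]
  have : Real.Gamma (Module.finrank ℝ E / 2) ≠ 0 := (Real.Gamma_pos_of_pos (by positivity)).ne'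
  simp only [nsmul_eq_mul]
  field_simp

theorem integrable_norm_mul_exp_neg_norm_sq {E : Type*} [NormedAddCommGroup E] [NormedSpace ℝ E]
    [FiniteDimensional ℝ E] [Nontrivial E] [MeasurableSpace E] [BorelSpace E]
    (ν : Measure E) [ν.IsAddHaarMeasure] :
    Integrable (fun z : E ↦ ‖z‖ * Real.exp (-‖z‖ ^ 2)) ν := by
  rw [integrable_fun_norm_addHaar ν (f := fun y ↦ y * Real.exp (-y ^ 2))]
  simp only [smul_eq_mul, ← mul_assoc, pow_sub_one_mul (Module.finrank_pos (R := ℝ) (M := E)).ne']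
  simpa using integrableOn_rpow_mul_exp_neg_rpow (p := 2) (s := Module.finrank ℝ E)
    (by linarith [(Module.finrank ℝ E).cast_nonneg (α := ℝ)]) (by norm_num)

theorem integral_norm_coord_mul_exp_neg_norm_sq {ι : Type*} [Fintype ι] (i : ι) :
    ∫ z : EuclideanSpace ℂ ι, ‖z i‖ * Real.exp (-‖z‖ ^ 2) =
      Real.sqrt Real.pi / 2 * ∫ z : EuclideanSpace ℂ ι, Real.exp (-‖z‖ ^ 2) := by
  classical
  let e := PiLp.continuousLinearEquiv 2 ℝ (fun _ : ι ↦ ℂ)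
  let ν := (volume : Measure (ι → ℂ)).map e.symm
  have hν : ν.IsAddHaarMeasure := e.symm.isAddHaarMeasure_map volume
  have key (f : EuclideanSpace ℂ ι → ℝ) :
      ∫ z, f z ∂ν = ∫ z : ι → ℂ, f (WithLp.toLp 2 z) :=
    e.symm.toHomeomorph.measurableEmbedding.integral_map f
  have h₀ : ∫ w : ℂ, Real.exp (-‖w‖ ^ 2) = Real.pi := by
    simpa using Complex.integral_rpow_mul_exp_neg_rpow (p := 2) (q := 0) (by norm_num) (by norm_num)
  have h₁ : ∫ w : ℂ, ‖w‖ * Real.exp (-‖w‖ ^ 2) = Real.sqrt Real.pi / 2 * Real.pi := by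
    have := Complex.integral_rpow_mul_exp_neg_rpow (p := 2) (q := 1) (by norm_num) (by norm_num)
    rw [show ((1 : ℝ) + 2) / 2 = 1 / 2 + 1 by norm_num, Real.Gamma_add_one (by norm_num),
      Real.Gamma_one_half_eq] at this
    simp only [Real.rpow_one, Real.rpow_two] at this
    rw [this]
    ring
  have hexp (z : ι → ℂ) : Real.exp (-‖WithLp.toLp 2 z‖ ^ 2) = ∏ j, Real.exp (-‖z j‖ ^ 2) := by
    rw [EuclideanSpace.norm_sq_eq, ← Finset.sum_neg_distrib, Real.exp_sum]
  have hmul (z : ι → ℂ) : ‖z i‖ * ∏ j, Real.exp (-‖z j‖ ^ 2) =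
      ∏ j, (if j = i then ‖z j‖ else 1) * Real.exp (-‖z j‖ ^ 2) := by
    rw [Finset.prod_mul_distrib, Finset.prod_ite_eq' Finset.univ i, if_pos (Finset.mem_univ i)]
  have main : ∫ z, ‖z i‖ * Real.exp (-‖z‖ ^ 2) ∂ν =
      Real.sqrt Real.pi / 2 * ∫ z, Real.exp (-‖z‖ ^ 2) ∂ν := by
    rw [key, key]
    simp only [hexp, hmul]
    rw [integral_fintype_prod_volume_eq_prod
        (fun j (w : ℂ) ↦ (if j = i then ‖w‖ else 1) * Real.exp (-‖w‖ ^ 2)),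
      integral_fintype_prod_volume_eq_prod (fun _ (w : ℂ) ↦ Real.exp (-‖w‖ ^ 2))]
    have (j : ι) : ∫ w : ℂ, (if j = i then ‖w‖ else 1) * Real.exp (-‖w‖ ^ 2) =
        (if j = i then Real.sqrt Real.pi / 2 else 1) * ∫ w : ℂ, Real.exp (-‖w‖ ^ 2) := by
      split_ifs <;> simp [h₀, h₁]
    simp only [this]
    rw [Finset.prod_mul_distrib, Finset.prod_ite_eq' Finset.univ i, if_pos (Finset.mem_univ i)]
  rw [Measure.isAddLeftInvariant_eq_smul volume ν]
  simp only [integral_smul_nnreal_measure, main, mul_smul_comm]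

theorem exists_orthonormalBasis_apply_eq {𝕜 E ι : Type*} [RCLike 𝕜] [NormedAddCommGroup E]
    [InnerProductSpace 𝕜 E] [FiniteDimensional 𝕜 E] [Fintype ι]
    (card_ι : Module.finrank 𝕜 E = Fintype.card ι) (i : ι) {u : E} (hu : ‖u‖ = 1) :
    ∃ b : OrthonormalBasis ι 𝕜 E, b i = u := by
  have hv : Orthonormal 𝕜 (({i} : Set ι).domRestrict fun _ ↦ u) :=
    ⟨fun _ ↦ hu, fun j k hjk ↦ (hjk (Subsingleton.elim j k)).elim⟩
  obtain ⟨b, hb⟩ := hv.exists_orthonormalBasis_extension_of_card_eq card_ι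
  exact ⟨b, hb i rfl⟩

theorem integral_norm_inner_mul_exp_neg_norm_sq {ι : Type*} [Fintype ι] (i : ι)
    {u : EuclideanSpace ℂ ι} (hu : ‖u‖ = 1) :
    ∫ z : EuclideanSpace ℂ ι, ‖inner ℂ u z‖ * Real.exp (-‖z‖ ^ 2) =
      ∫ z : EuclideanSpace ℂ ι, ‖z i‖ * Real.exp (-‖z‖ ^ 2) := by
  obtain ⟨b, rfl⟩ := exists_orthonormalBasis_apply_eq finrank_euclideanSpace i hu
  let e : EuclideanSpace ℂ ι ≃ₗᵢ[ℝ] EuclideanSpace ℂ ι :=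
    { b.repr.toLinearEquiv.restrictScalars ℝ with norm_map' := b.repr.norm_map }
  rw [← e.measurePreserving.integral_comp e.toHomeomorph.measurableEmbedding
    fun z ↦ ‖z i‖ * Real.exp (-‖z‖ ^ 2)]
  refine integral_congr_ae (.of_forall fun z ↦ ?_)
  have he : e z = b.repr z := rfl
  simp only [he, b.repr_apply_apply, b.repr.norm_map]

theorem sqrt_pi_mul_Gamma_div_eq (n : ℕ) :
    Real.sqrt Real.pi * Real.Gamma (n + 1) / (2 * Real.Gamma (n + 1 + 1 / 2)) =
      4 ^ n / ((2 * n + 1) * n.centralBinom) := by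
  induction n with
  | zero =>
    have : Real.sqrt Real.pi ≠ 0 := by positivity
    simp only [Nat.cast_zero, zero_add]
    rw [add_comm (1 : ℝ), Real.Gamma_add_one (by norm_num), Real.Gamma_one_half_eq]
    field_simp
    simp
  | succ n ih =>
    have hc : ((n : ℝ) + 1) * (n + 1).centralBinom = 2 * (2 * n + 1) * n.centralBinom := by
      exact_mod_cast n.succ_mul_centralBinom_succ
    have hc₀ : (n.centralBinom : ℝ) ≠ 0 := by exact_mod_cast n.centralBinom_ne_zero
    have hc₁ : ((n + 1).centralBinom : ℝ) = 2 * (2 * n + 1) * n.centralBinom / (n + 1) := by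
      rw [← hc]; field_simp
    have hG : Real.Gamma (n + 1 + 1 / 2) ≠ 0 := (Real.Gamma_pos_of_pos (by positivity)).ne'
    push_cast
    rw [add_right_comm ((n : ℝ) + 1) 1 (1 / 2),
      Real.Gamma_add_one (s := (n : ℝ) + 1) (by positivity),
      Real.Gamma_add_one (s := (n : ℝ) + 1 + 1 / 2) (by positivity), hc₁, pow_succ]
    rw [div_eq_div_iff (by positivity) (by positivity)] at ih ⊢
    generalize Real.Gamma (n + 1 + 1 / 2) = G at *
    field_simp
    linear_combination 2 * ih

theorem exists_unitaryGroup_apply_eq {ι : Type*} [Fintype ι] [DecidableEq ι] (i : ι)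
    {u : EuclideanSpace ℂ ι} (hu : ‖u‖ = 1) :
    ∃ g : Matrix.unitaryGroup ι ℂ, ∀ j, (g : Matrix ι ι ℂ) j i = u j := by
  obtain ⟨b, rfl⟩ := exists_orthonormalBasis_apply_eq (𝕜 := ℂ) finrank_euclideanSpace i hu
  exact ⟨⟨_, (EuclideanSpace.basisFun ι ℂ).toMatrix_orthonormalBasis_mem_unitary b⟩,
    fun j ↦ by simp [Module.Basis.toMatrix_apply]⟩

theorem integral_norm_inner_column {ι : Type*} [Fintype ι] [DecidableEq ι] (i : ι)
    [MeasurableSpace (Matrix.unitaryGroup ι ℂ)] [BorelSpace (Matrix.unitaryGroup ι ℂ)]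
    (μ : Measure (Matrix.unitaryGroup ι ℂ)) [μ.IsMulLeftInvariant] (z : EuclideanSpace ℂ ι) :
    ∫ U : Matrix.unitaryGroup ι ℂ, ‖inner ℂ (WithLp.toLp 2 ((U : Matrix ι ι ℂ).col i)) z‖ ∂μ =
      ‖z‖ * ∫ U : Matrix.unitaryGroup ι ℂ, ‖(U : Matrix ι ι ℂ) i i‖ ∂μ := by
  obtain rfl | hz := eq_or_ne z 0
  · simp
  have hz' : ‖z‖ ≠ 0 := norm_ne_zero_iff.2 hz
  obtain ⟨g, hg⟩ := exists_unitaryGroup_apply_eq i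
    (u := ((‖z‖⁻¹ : ℝ) : ℂ) • z) (by simp [norm_smul, hz'])
  have hzg (j : ι) : z j = ‖z‖ * (g : Matrix ι ι ℂ) j i := by
    simp [hg, hz']
  rw [← integral_mul_left_eq_self (fun U : Matrix.unitaryGroup ι ℂ ↦ ‖(U : Matrix ι ι ℂ) i i‖) g⁻¹,
    ← integral_const_mul]
  refine integral_congr_ae (.of_forall fun U ↦ ?_)
  have h : inner ℂ z (WithLp.toLp 2 ((U : Matrix ι ι ℂ).col i)) =
      ‖z‖ * ((g⁻¹ * U : Matrix.unitaryGroup ι ℂ) : Matrix ι ι ℂ) i i := by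
    rw [PiLp.inner_apply, Matrix.UnitaryGroup.mul_val, Matrix.mul_apply, Finset.mul_sum]
    refine Finset.sum_congr rfl fun j _ ↦ ?_
    rw [hzg j]
    simp
    ring
  simp only [norm_inner_symm _ z, h, norm_mul, Complex.norm_real, norm_norm]

theorem norm_toLp_col_eq_one {ι : Type*} [Fintype ι] [DecidableEq ι]
    (U : Matrix.unitaryGroup ι ℂ) (i : ι) :
    ‖(WithLp.toLp 2 ((U : Matrix ι ι ℂ).col i) : EuclideanSpace ℂ ι)‖ = 1 := by
  have h := congrFun (congrFun (Matrix.UnitaryGroup.star_mul_self U) i) i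
  rw [← sq_eq_sq₀ (norm_nonneg _) zero_le_one, one_pow, EuclideanSpace.norm_sq_eq,
    ← Complex.ofReal_inj]
  simpa [Matrix.mul_apply, Complex.conj_mul'] using h

theorem integral_norm_entry_unitaryGroup {ι : Type*} [Fintype ι] [DecidableEq ι] (i : ι)
    [MeasurableSpace (Matrix.unitaryGroup ι ℂ)] [BorelSpace (Matrix.unitaryGroup ι ℂ)]
    (μ : Measure (Matrix.unitaryGroup ι ℂ)) [μ.IsMulLeftInvariant] [IsProbabilityMeasure μ] :
    ∫ U : Matrix.unitaryGroup ι ℂ, ‖(U : Matrix ι ι ℂ) i i‖ ∂μ =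
      Real.sqrt Real.pi * Real.Gamma (Fintype.card ι) /
        (2 * Real.Gamma (Fintype.card ι + 1 / 2)) := by
  have : Nonempty ι := ⟨i⟩
  have : SecondCountableTopology (Matrix ι ι ℂ) :=
    inferInstanceAs (SecondCountableTopology (ι → ι → ℂ))
  let F : Matrix.unitaryGroup ι ℂ → EuclideanSpace ℂ ι → ℝ := fun U z ↦
    ‖inner ℂ (WithLp.toLp 2 ((U : Matrix ι ι ℂ).col i)) z‖ * Real.exp (-‖z‖ ^ 2)
  have hcol : Continuous fun U : Matrix.unitaryGroup ι ℂ ↦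
      (WithLp.toLp 2 ((U : Matrix ι ι ℂ).col i) : EuclideanSpace ℂ ι) :=
    (PiLp.continuous_toLp 2 _).comp
      (continuous_pi fun j ↦ continuous_subtype_val.matrix_elem j i)
  have hcont : Continuous (Function.uncurry F) :=
    ((hcol.comp continuous_fst).inner continuous_snd).norm.mul (by fun_prop)
  have hint : Integrable (Function.uncurry F) (μ.prod volume) := by
    refine ((integrable_norm_mul_exp_neg_norm_sq
      (volume : Measure (EuclideanSpace ℂ ι))).comp_snd μ).mono' hcont.aestronglyMeasurable
      (.of_forall fun p ↦ ?_)
    simp only [F, Function.uncurry, norm_mul, Real.norm_eq_abs, Real.abs_exp]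
    gcongr
    simpa [norm_toLp_col_eq_one] using
      norm_inner_le_norm (𝕜 := ℂ) (WithLp.toLp 2 ((p.1 : Matrix ι ι ℂ).col i)) p.2
  have hswap := integral_integral_swap hint
  simp only [F, integral_norm_inner_mul_exp_neg_norm_sq i (norm_toLp_col_eq_one _ i),
    integral_mul_const, integral_norm_inner_column, integral_const, probReal_univ, one_smul,
    integral_norm_coord_mul_exp_neg_norm_sq, mul_right_comm ‖_‖ (∫ _, _ ∂μ),
    integral_norm_mul_exp_neg_norm_sq] at hswap
  have hdim : (Module.finrank ℝ (EuclideanSpace ℂ ι) : ℝ) = 2 * Fintype.card ι := by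
    rw [finrank_real_of_complex, finrank_euclideanSpace]
    push_cast
    rfl
  have hpos : 0 < ∫ z : EuclideanSpace ℂ ι, Real.exp (-‖z‖ ^ 2) := by
    simpa using (GaussianFourier.integral_rexp_neg_mul_sq_norm (V := EuclideanSpace ℂ ι)
      one_pos).trans_gt (by positivity)
  have hG : Real.Gamma (Fintype.card ι + 1 / 2) ≠ 0 := (Real.Gamma_pos_of_pos (by positivity)).ne'
  have hG' : Real.Gamma (Fintype.card ι) ≠ 0 :=
    (Real.Gamma_pos_of_pos (by exact_mod_cast Fintype.card_pos)).ne'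
  rw [hdim, add_div, mul_div_cancel_left₀ _ (two_ne_zero' ℝ)] at hswap
  generalize Real.Gamma (Fintype.card ι + 1 / 2) = G at *
  field_simp at hswap ⊢
  linear_combination -hswap

/-- The Haar-average of the modulus of a single entry of a random unitary,
`∫ |U₀₀| dμ(U)` over the Haar probability measure on the unitary group `U(d)`, equals
`√π Γ(d) / (2 Γ(d + 1/2))`, equivalently `4^(d-1) / ((2d-1) · C(2d-2, d-1))`.
This is the symmetry of entanglement `E_S` of a separable pure state. -/
theorem haar_average_abs_entry_of_unitary
    {d : ℕ} (hd : 1 ≤ d)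
    [MeasurableSpace (Matrix.unitaryGroup (Fin d) ℂ)]
    [BorelSpace (Matrix.unitaryGroup (Fin d) ℂ)]
    (μ : Measure (Matrix.unitaryGroup (Fin d) ℂ))
    [μ.IsHaarMeasure] [IsProbabilityMeasure μ] :
    ∫ U : Matrix.unitaryGroup (Fin d) ℂ,
        ‖(U : Matrix (Fin d) (Fin d) ℂ) ⟨0, hd⟩ ⟨0, hd⟩‖ ∂μ =
        Real.sqrt Real.pi * Real.Gamma d / (2 * Real.Gamma (d + 1 / 2)) ∧
    Real.sqrt Real.pi * Real.Gamma d / (2 * Real.Gamma (d + 1 / 2)) =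
        4 ^ (d - 1) / ((2 * d - 1) * Nat.choose (2 * d - 2) (d - 1)) := by
  refine ⟨by simpa using integral_norm_entry_unitaryGroup ⟨0, hd⟩ μ, ?_⟩
  obtain ⟨n, rfl⟩ := Nat.exists_eq_add_of_le' hd
  have h := sqrt_pi_mul_Gamma_div_eq n
  rw [Nat.centralBinom_eq_two_mul_choose] at h
  rw [Nat.add_sub_cancel, show 2 * (n + 1) - 2 = 2 * n by omega]
  push_cast
  rw [h]
  ring
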